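/- Let F be a field, σ a sesqui-morphism, G a σ-symmetric F*-graph with adjacency matrix M on vertex set V, and xy an edge (M(x,y) ≠ 0). Let N be the adjacency matrix of the pivot-complementation G∧xy. Then for every subset X ⊆ V, rk(N[X, V\X]) = rk(M[X, V\X]). -/

import Mathlib

noncomputable def rkSub {V W F : Type*} [Fintype V] [Fintype W] [Field F]
    (M : Matrix V W F) (X : Finset V) (Y : Finset W) : ℕ :=
  (M.submatrix (fun i : X => (i : V)) (fun j : Y => (j : W))).rank

/-!
The cut-rank of `X` is `|V \ X|` minus the dimension of the space of those `v` for which `v` and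
`M *ᵥ v` both vanish on `X`. Now let `w` be obtained from `v` by replacing the coordinates at `x`
and `y` by nonzero multiples of those of `M *ᵥ v`. Solving `M *ᵥ v` for `v x` and `v y`, which is
possible because `M y x` and `M x y` are nonzero, shows that `N *ᵥ w` arises from `M *ᵥ v` by
replacing these coordinates by nonzero multiples of those of `v`. Hence at every `i` the pairs
`(v i, (M *ᵥ v) i)` and `(w i, (N *ᵥ w) i)` vanish together, and `v ↦ w` identifies the two spaces
for every `X` at once. The diagonals of `M` and `N` do not affect cut-ranks, so they can be chosen
to suit this exchange.
-/

open Matrix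

section Vector

variable {V R : Type*} [Fintype V] [DecidableEq V]

theorem extend_compl_apply_of_mem [Zero R] {X : Finset V} (u : (Xᶜ : Finset V) → R) {i : V}
    (hi : i ∈ X) : Function.extend Subtype.val u 0 i = 0 := by
  refine Function.extend_apply' _ _ _ ?_
  rintro ⟨j, rfl⟩
  exact Finset.mem_compl.mp j.2 hi

theorem extend_compl_comp_val [Zero R] {X : Finset V} {v : V → R} (hv : ∀ i ∈ X, v i = 0) :
    Function.extend (Subtype.val : (Xᶜ : Finset V) → V) (v ∘ Subtype.val) 0 = v := by
  ext i
  by_cases hi : i ∈ X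
  · rw [extend_compl_apply_of_mem _ hi, hv i hi]
  · exact Subtype.val_injective.extend_apply _ _ ⟨i, Finset.mem_compl.mpr hi⟩

theorem mulVec_extend_zero {m n W : Type*} [Fintype n] [Fintype W] [NonUnitalNonAssocSemiring R]
    (A : Matrix m W R) {f : n → W} (hf : Function.Injective f) (u : n → R) :
    A *ᵥ Function.extend f u 0 = A.submatrix id f *ᵥ u := by
  ext i
  refine (Fintype.sum_of_injective f hf _ _ (fun j hj => ?_) fun j => ?_).symm
  · rw [Function.extend_apply' _ _ _ hj, Pi.zero_apply, mul_zero]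
  · exact congrArg (A i (f j) * ·) (hf.extend_apply u 0 j).symm

theorem dotProduct_update [NonUnitalNonAssocRing R] (u v : V → R) (i : V) (c : R) :
    u ⬝ᵥ Function.update v i c = u ⬝ᵥ v + u i * (c - v i) := by
  rw [Pi.update_eq_sub_add_single, dotProduct_add, dotProduct_sub, dotProduct_single,
    dotProduct_single, mul_sub]
  abel

end Vector

section CutRank

variable {F V : Type*} [Field F] [Fintype V]

theorem rkSub_congr {W : Type*} [Fintype W] {M N : Matrix V W F} {X : Finset V} {Y : Finset W}
    (h : ∀ i ∈ X, ∀ j ∈ Y, N i j = M i j) : rkSub N X Y = rkSub M X Y :=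
  congrArg Matrix.rank <| Matrix.ext fun i j => h i i.2 j j.2

/-- The space of those `v` for which both `v` and `M *ᵥ v` vanish on `X`: a form of the kernel of
the block `M[X, V \ X]` that treats the coordinates `v i` and `(M *ᵥ v) i` symmetrically. -/
def cutKernel (M : Matrix V V F) (X : Finset V) : Submodule F (V → F) where
  carrier := {v | ∀ i ∈ X, v i = 0 ∧ (M *ᵥ v) i = 0}
  zero_mem' := by simp
  add_mem' hv hw i hi := by simp [Matrix.mulVec_add, hv i hi, hw i hi]
  smul_mem' c v hv i hi := by simp [Matrix.mulVec_smul, hv i hi]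

theorem mem_cutKernel {M : Matrix V V F} {X : Finset V} {v : V → F} :
    v ∈ cutKernel M X ↔ ∀ i ∈ X, v i = 0 ∧ (M *ᵥ v) i = 0 :=
  Iff.rfl

variable [DecidableEq V]

theorem rkSub_compl_congr {M N : Matrix V V F} (h : ∀ i j, i ≠ j → N i j = M i j)
    (X : Finset V) : rkSub N X Xᶜ = rkSub M X Xᶜ :=
  rkSub_congr fun i hi j hj => h i j fun hij => Finset.mem_compl.mp hj (hij ▸ hi)

theorem map_extendByZero_ker_submatrix (M : Matrix V V F) (X : Finset V) :
    (LinearMap.ker (M.submatrix (Subtype.val : X → V)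
        (Subtype.val : (Xᶜ : Finset V) → V)).mulVecLin).map
      (Function.ExtendByZero.linearMap F Subtype.val) = cutKernel M X := by
  have hM (u : (Xᶜ : Finset V) → F) (i : X) : (M *ᵥ Function.extend Subtype.val u 0) i =
      (M.submatrix (Subtype.val : X → V) Subtype.val *ᵥ u) i :=
    congrFun (mulVec_extend_zero M Subtype.val_injective u) i
  ext v
  rw [mem_cutKernel]
  constructor
  · rintro ⟨u, hu, rfl⟩ i hi
    exact ⟨extend_compl_apply_of_mem u hi, (hM u ⟨i, hi⟩).trans (congrFun hu ⟨i, hi⟩)⟩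
  · intro hv
    have hext := extend_compl_comp_val fun i hi => (hv i hi).1
    refine ⟨v ∘ Subtype.val, LinearMap.mem_ker.mpr (funext fun i => ?_), hext⟩
    rw [Matrix.mulVecLin_apply, ← hM, hext, (hv i i.2).2, Pi.zero_apply]

theorem rkSub_compl_add_finrank_cutKernel (M : Matrix V V F) (X : Finset V) :
    rkSub M X Xᶜ + Module.finrank F (cutKernel M X) = Xᶜ.card := by
  have hinj : Function.Injective
      (Function.ExtendByZero.linearMap F (Subtype.val : (Xᶜ : Finset V) → V)) :=
    Function.extend_injective Subtype.val_injective (0 : V → F)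
  rw [← map_extendByZero_ker_submatrix, ← (Submodule.equivMapOfInjective _ hinj _).finrank_eq,
    rkSub, Matrix.rank, LinearMap.finrank_range_add_finrank_ker,
    Module.finrank_fintype_fun_eq_card, Fintype.card_coe]

theorem rkSub_compl_eq_of_zero_iff {M N : Matrix V V F} (T : (V → F) →ₗ[F] (V → F))
    (hT : ∀ v i, (T v i = 0 ∧ (N *ᵥ T v) i = 0) ↔ (v i = 0 ∧ (M *ᵥ v) i = 0))
    (X : Finset V) : rkSub N X Xᶜ = rkSub M X Xᶜ := by
  have hinj : Function.Injective T := by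
    refine (injective_iff_map_eq_zero T).mpr fun v hv => funext fun i => ?_
    exact ((hT v i).mp (by simp [hv])).1
  have hcomap : (cutKernel N X).comap T = cutKernel M X := by
    ext v
    exact forall₂_congr fun i _ => hT v i
  have hmap : (cutKernel M X).map T = cutKernel N X := by
    rw [← hcomap, Submodule.map_comap_eq_of_surjective (LinearMap.surjective_of_injective hinj)]
  have hfinrank : Module.finrank F (cutKernel M X) = Module.finrank F (cutKernel N X) := by
    rw [(Submodule.equivMapOfInjective T hinj (cutKernel M X)).finrank_eq, hmap]
  apply Nat.add_right_cancel (m := Module.finrank F (cutKernel N X))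
  rw [rkSub_compl_add_finrank_cutKernel, ← hfinrank, rkSub_compl_add_finrank_cutKernel]

end CutRank

theorem sesqui_ne_zero {K L : Type*} [DivisionRing K] [DivisionRing L] {σ : K → L} (e : K →+* L)
    (he : ∀ a, e a = σ a / σ 1) {a : K} (ha : a ≠ 0) : σ a ≠ 0 :=
  (div_ne_zero_iff.mp (he a ▸ (map_ne_zero e).mpr ha)).1

section Pivot

variable {F V : Type*} [Field F] [DecidableEq V]

/-- The adjacency matrix of the pivot-complementation `G ∧ xy`, where `M` is the adjacency matrix
of `G` and `s` stands for `σ 1`. Only the diagonal entries at `x` and `y` are set to `0`: the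
others follow the generic formula, so that `pivotExchange` acts exactly. -/
def pivotMatrix (s : F) (M : Matrix V V F) (x y : V) : Matrix V V F := fun z t =>
  if z = t ∧ (z = x ∨ z = y) then 0
  else if z = x ∧ t = y then -1 / M y x
  else if z = y ∧ t = x then -(s ^ 2) / M x y
  else if z = x then M y t / M y x
  else if z = y then s * M x t / M x y
  else if t = x then s * M z y / M x y
  else if t = y then M z x / M y x
  else M z t - M z x * M y t / M y x - M z y * M x t / M x y

section Rows

variable {M : Matrix V V F} {x y : V}

theorem pivotMatrix_row_left (s : F) (hMyy : M y y = 0) :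
    pivotMatrix s M x y x = (M y x)⁻¹ • (M y - Pi.single x (M y x) - Pi.single y 1) := by
  ext t
  simp only [pivotMatrix, Pi.smul_apply, Pi.sub_apply, Pi.single_apply, smul_eq_mul]
  grind

theorem pivotMatrix_row_right (s : F) (hMxx : M x x = 0) :
    pivotMatrix s M x y y = (s / M x y) • (M x - Pi.single y (M x y) - Pi.single x s) := by
  ext t
  simp only [pivotMatrix, Pi.smul_apply, Pi.sub_apply, Pi.single_apply, smul_eq_mul]
  grind

theorem pivotMatrix_row_of_ne (s : F) (hMxy : M x y ≠ 0) (hMyx : M y x ≠ 0)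
    (hMxx : M x x = 0) (hMyy : M y y = 0) {z : V} (hzx : z ≠ x) (hzy : z ≠ y) :
    pivotMatrix s M x y z = M z - (M z x / M y x) • (M y - Pi.single y 1) -
      (M z y / M x y) • (M x - Pi.single x s) := by
  ext t
  simp only [pivotMatrix, Pi.smul_apply, Pi.sub_apply, Pi.single_apply, smul_eq_mul]
  grind

theorem pivotMatrix_congr (s : F) {M' : Matrix V V F} (h : ∀ i j, i ≠ j → M i j = M' i j)
    (hxy : x ≠ y) {z t : V} (hzt : z ≠ t) :
    pivotMatrix s M x y z t = pivotMatrix s M' x y z t := by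
  simp only [pivotMatrix]
  grind

end Rows

variable [Fintype V]

/-- The change of variables `v ↦ w` under which pivoting trades `v i` for `(M *ᵥ v) i` at `i = x`
and `i = y`, up to nonzero factors. The factor `s⁻¹` at `x` undoes the factor `s` in the column of
`x` of `pivotMatrix s M x y`. -/
def pivotExchange (s : F) (M : Matrix V V F) (x y : V) : (V → F) →ₗ[F] (V → F) :=
  (((1 : Matrix V V F).updateRow x (s⁻¹ • M x)).updateRow y (M y)).mulVecLin

theorem pivotExchange_apply (s : F) (M : Matrix V V F) (x y : V) (v : V → F) :
    pivotExchange s M x y v =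
      Function.update (Function.update v x (s⁻¹ * (M *ᵥ v) x)) y ((M *ᵥ v) y) := by
  simp only [pivotExchange, Matrix.mulVecLin_apply, Matrix.updateRow_mulVec, Matrix.one_mulVec,
    smul_dotProduct, smul_eq_mul]
  rfl

theorem pivotMatrix_mulVec_pivotExchange {s : F} (hs : s ≠ 0) {M : Matrix V V F} {x y : V}
    (hMxy : M x y ≠ 0) (hMyx : M y x ≠ 0) (hMxx : M x x = 0) (hMyy : M y y = 0)
    (v : V → F) :
    pivotMatrix s M x y *ᵥ pivotExchange s M x y v =
      Function.update (Function.update (M *ᵥ v) x (-v x)) y (-(s * v y)) := by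
  have hxy : x ≠ y := fun h => hMxy (h ▸ hMxx)
  have hM (z : V) : M z ⬝ᵥ pivotExchange s M x y v =
      (M *ᵥ v) z + M z x * (s⁻¹ * (M *ᵥ v) x - v x) + M z y * ((M *ᵥ v) y - v y) := by
    rw [pivotExchange_apply, dotProduct_update, dotProduct_update,
      Function.update_of_ne hxy.symm]
    rfl
  have hx : pivotExchange s M x y v x = s⁻¹ * (M *ᵥ v) x := by simp [pivotExchange_apply, hxy]
  have hy : pivotExchange s M x y v y = (M *ᵥ v) y := by simp [pivotExchange_apply]
  ext z
  rw [Matrix.mulVec]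
  by_cases hzx : z = x
  · subst hzx
    simp only [pivotMatrix_row_left s hMyy, sub_dotProduct, smul_dotProduct,
      single_dotProduct, smul_eq_mul, hM, hx, hy, hMyy, Function.update_of_ne hxy,
      Function.update_self]
    field
  by_cases hzy : z = y
  · subst hzy
    simp only [pivotMatrix_row_right s hMxx, sub_dotProduct, smul_dotProduct,
      single_dotProduct, smul_eq_mul, hM, hx, hy, hMxx, Function.update_self]
    field
  simp only [pivotMatrix_row_of_ne s hMxy hMyx hMxx hMyy hzx hzy, sub_dotProduct,
    smul_dotProduct, single_dotProduct, smul_eq_mul, hM, hx, hy, hMxx, hMyy,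
    Function.update_of_ne hzx, Function.update_of_ne hzy]
  field

theorem rkSub_pivotMatrix_compl {s : F} (hs : s ≠ 0) {M : Matrix V V F} {x y : V}
    (hMxy : M x y ≠ 0) (hMyx : M y x ≠ 0) (hMxx : M x x = 0) (hMyy : M y y = 0)
    (X : Finset V) : rkSub (pivotMatrix s M x y) X Xᶜ = rkSub M X Xᶜ := by
  have hxy : x ≠ y := fun h => hMxy (h ▸ hMxx)
  refine rkSub_compl_eq_of_zero_iff (pivotExchange s M x y) (fun v i => ?_) X
  rw [pivotMatrix_mulVec_pivotExchange hs hMxy hMyx hMxx hMyy, pivotExchange_apply]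
  by_cases hiy : i = y
  · simp [hiy, hs, and_comm]
  by_cases hix : i = x
  · simp [hix, hxy, hs, and_comm]
  simp [hix, hiy]

theorem pivot_cutrank_general {s : F} (hs : s ≠ 0) {M N : Matrix V V F} {x y : V}
    (hxy : x ≠ y) (hMxy : M x y ≠ 0) (hMyx : M y x ≠ 0)
    (hN : ∀ z t, z ≠ t → N z t = pivotMatrix s M x y z t) (X : Finset V) :
    rkSub N X Xᶜ = rkSub M X Xᶜ := by
  let M₀ : Matrix V V F := fun z t => if z = t then 0 else M z t
  have hM₀ (z t : V) (hzt : z ≠ t) : M₀ z t = M z t := if_neg hzt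
  have hdiag (z : V) : M₀ z z = 0 := if_pos rfl
  calc
    rkSub N X Xᶜ = rkSub (pivotMatrix s M₀ x y) X Xᶜ :=
      rkSub_compl_congr (fun z t hzt =>
        (hN z t hzt).trans (pivotMatrix_congr s hM₀ hxy hzt).symm) X
    _ = rkSub M₀ X Xᶜ :=
      rkSub_pivotMatrix_compl hs (by rwa [hM₀ x y hxy]) (by rwa [hM₀ y x hxy.symm])
        (hdiag x) (hdiag y) X
    _ = rkSub M X Xᶜ := rkSub_compl_congr hM₀ X

end Pivot

/-- Pivot-complementation does not change the cut-rank function. -/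
theorem pivot_cutrank {F V : Type*} [Field F] [Fintype V] [DecidableEq V]
    (σ : F → F)
    (hinv : ∀ a : F, σ (σ a) = a)
    (hauto : ∃ e : F ≃+* F, ∀ x : F, e x = σ x / σ 1)
    (M : Matrix V V F) (hsym : ∀ z t : V, M z t = σ (M t z))
    (hdiag : ∀ z : V, M z z = 0)
    (x y : V) (hxy : x ≠ y) (hedge : M x y ≠ 0)
    (N : Matrix V V F)
    (hN : ∀ z t : V,
      N z t =
        if z = t then 0
        else if z = x ∧ t = y then -1 / M y x
        else if z = y ∧ t = x then -(σ 1 ^ 2) / M x y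
        else if z = x then M y t / M y x
        else if z = y then σ 1 * M x t / M x y
        else if t = x then σ 1 * M z y / M x y
        else if t = y then M z x / M y x
        else M z t - M z x * M y t / M y x - M z y * M x t / M x y) :
    ∀ X : Finset V, rkSub N X Xᶜ = rkSub M X Xᶜ := by
  obtain ⟨e, he⟩ := hauto
  have hσ : ∀ {a : F}, a ≠ 0 → σ a ≠ 0 := sesqui_ne_zero (e : F →+* F) he
  have hMyx : M y x ≠ 0 := hsym y x ▸ hσ hedge
  refine pivot_cutrank_general (hσ one_ne_zero) hxy hedge hMyx fun z t hzt => ?_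
  simp only [hN, pivotMatrix, hzt, false_and, if_false]
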